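/- arXiv:1306.6224 — 3 statements merged into one kernel-verified Lean document; each statement's English description precedes it below -/
import Mathlib

section
/- Infinitary rewriting is contained in bi-infinite rewriting: →→→ ⊆ ∞→∞, where →→→ := μx.νy.((→ε ∪ ↓x)* ∘ ↓y) and ∞→∞ := νy.((→ε ∪ ↓y)*). -/
open Relation

/-- The polynomial functor of a signature. -/
def Sig {F : Type} (ar : F → ℕ) (X : Type) : PFunctor.{0} :=
  ⟨X ⊕ F, fun a => match a with
    | Sum.inl _ => Empty
    | Sum.inr f => Fin (ar f)⟩

/-- Possibly infinite terms: the final coalgebra (M-type) of the signature functor. -/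
abbrev Tm {F : Type} (ar : F → ℕ) (X : Type) : Type := (Sig ar X).M

/-- The lifting `↓R` of a relation on terms. -/
def lift {F : Type} (ar : F → ℕ) (X : Type) (R : Tm ar X → Tm ar X → Prop) :
    Tm ar X → Tm ar X → Prop := fun s t =>
  s = t ∨ ∃ (f : F) (sa ta : Fin (ar f) → Tm ar X),
    s = PFunctor.M.mk ⟨Sum.inr f, sa⟩ ∧ t = PFunctor.M.mk ⟨Sum.inr f, ta⟩ ∧
    ∀ i, R (sa i) (ta i)

/-- Knaster–Tarski least fixed point. -/
def mu {L : Type*} [CompleteLattice L] (f : L → L) : L := sInf {x | f x ≤ x}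

/-- Knaster–Tarski greatest fixed point. -/
def nu {L : Type*} [CompleteLattice L] (f : L → L) : L := sSup {x | x ≤ f x}

/-- The infinitary rewrite relation `→→→ := μx.νy.((→ε ∪ ↓x)* ∘ ↓y)`. -/
def ired {F X : Type} (ar : F → ℕ) (root : Tm ar X → Tm ar X → Prop) :
    Tm ar X → Tm ar X → Prop :=
  mu (fun x => nu (fun y => Relation.Comp (ReflTransGen (root ⊔ lift ar X x)) (lift ar X y)))

/-- The bi-infinite rewrite relation `∞→∞ := νy.((→ε ∪ ↓y)*)`. -/
def biInf {F X : Type} (ar : F → ℕ) (root : Tm ar X → Tm ar X → Prop) :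
    Tm ar X → Tm ar X → Prop :=
  nu (fun y => ReflTransGen (root ⊔ lift ar X y))

/-- Infinitary rewriting is contained in bi-infinite rewriting: `→→→ ⊆ ∞→∞`. -/
theorem ired_le_biInf {F X : Type} (ar : F → ℕ) (root : Tm ar X → Tm ar X → Prop) :
    ired ar root ≤ biInf ar root := by
  have lift_mono : ∀ {R S : Tm ar X → Tm ar X → Prop}, R ≤ S → lift ar X R ≤ lift ar X S := by
    intro R S h s t hst
    rcases hst with h1 | ⟨f, sa, ta, h1, h2, h3⟩
    · exact Or.inl h1
    · exact Or.inr ⟨f, sa, ta, h1, h2, fun i => h _ _ (h3 i)⟩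
  have star_mono : ∀ {R S : Tm ar X → Tm ar X → Prop}, R ≤ S → ∀ s t,
      ReflTransGen (root ⊔ lift ar X R) s t → ReflTransGen (root ⊔ lift ar X S) s t := by
    intro R S h s t hst
    have hle : root ⊔ lift ar X R ≤ root ⊔ lift ar X S := sup_le_sup_left (lift_mono h) _
    exact ReflTransGen.mono (fun a b hab => hle a b hab) _ _ hst
  have hpost : biInf ar root ≤ ReflTransGen (root ⊔ lift ar X (biInf ar root)) := by
    refine sSup_le fun y hy => ?_
    have hyB : y ≤ biInf ar root := le_sSup hy
    intro s t hst
    exact star_mono hyB s t (hy s t hst)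
  refine sInf_le ?_
  show nu (fun y => Relation.Comp (ReflTransGen (root ⊔ lift ar X (biInf ar root))) (lift ar X y)) ≤ biInf ar root
  refine sSup_le fun y hy => ?_
  refine le_trans (le_sup_right : y ≤ biInf ar root ⊔ y) (le_sSup ?_)
  show biInf ar root ⊔ y ≤ ReflTransGen (root ⊔ lift ar X (biInf ar root ⊔ y))
  refine sup_le ?_ ?_
  · intro s t hst
    exact star_mono le_sup_left s t (hpost s t hst)
  · intro s t hst
    obtain ⟨u, h1, h2⟩ := hy s t hst
    have h2' : (root ⊔ lift ar X (biInf ar root ⊔ y)) u t :=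
      Or.inr (lift_mono le_sup_right u t h2)
    exact (star_mono le_sup_left s u h1).tail h2'
end

section
/- Infinitary conversion is contained in infinitary equational reasoning: ((→→→)⁻¹ ∘ →→→)* ⊆ =^∞, where →→→ := μx.νy.((→ε ∪ ↓x)* ∘ ↓y) and =^∞ := νy.((→ε⁻¹ ∪ →ε ∪ ↓y)*). -/
open Relation

/-- Infinitary equational reasoning: `=^∞ := νy.((→ε⁻¹ ∪ →ε ∪ ↓y)*)`. -/
def eqInf {F X : Type} (ar : F → ℕ) (root : Tm ar X → Tm ar X → Prop) :
    Tm ar X → Tm ar X → Prop :=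
  nu (fun y => ReflTransGen (flip root ⊔ root ⊔ lift ar X y))

theorem lift_mono' {F X : Type} (ar : F → ℕ) {R S : Tm ar X → Tm ar X → Prop}
    (h : ∀ a b, R a b → S a b) {s t : Tm ar X} (hs : lift ar X R s t) : lift ar X S s t := by
  rcases hs with rfl | ⟨f, sa, ta, h1, h2, h3⟩
  · exact Or.inl rfl
  · exact Or.inr ⟨f, sa, ta, h1, h2, fun i => h _ _ (h3 i)⟩

theorem step_mono {F X : Type} (ar : F → ℕ) (root : Tm ar X → Tm ar X → Prop)
    {R S : Tm ar X → Tm ar X → Prop}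
    (h : ∀ a b, R a b → S a b) {s t : Tm ar X}
    (hs : (flip root ⊔ root ⊔ lift ar X R) s t) : (flip root ⊔ root ⊔ lift ar X S) s t := by
  rcases hs with hs | hs
  · exact Or.inl hs
  · exact Or.inr (lift_mono' ar h hs)

theorem eqInf_coind {F X : Type} (ar : F → ℕ) (root : Tm ar X → Tm ar X → Prop)
    (Y : Tm ar X → Tm ar X → Prop)
    (h : ∀ a b, Y a b → ReflTransGen (flip root ⊔ root ⊔ lift ar X Y) a b) :
    Y ≤ eqInf ar root := by
  unfold eqInf nu
  exact le_sSup (show Y ≤ _ from h)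

theorem eqInf_out {F X : Type} (ar : F → ℕ) (root : Tm ar X → Tm ar X → Prop) :
    eqInf ar root ≤ ReflTransGen (flip root ⊔ root ⊔ lift ar X (eqInf ar root)) := by
  conv_lhs => unfold eqInf nu
  refine sSup_le fun Y hY => ?_
  intro a b hab
  exact ReflTransGen.mono (fun _ _ => step_mono ar root (eqInf_coind ar root Y hY)) _ _ (hY a b hab)

theorem eqInf_in {F X : Type} (ar : F → ℕ) (root : Tm ar X → Tm ar X → Prop) :
    ReflTransGen (flip root ⊔ root ⊔ lift ar X (eqInf ar root)) ≤ eqInf ar root := by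
  refine eqInf_coind ar root _ fun a b hab => ?_
  exact ReflTransGen.mono (fun _ _ => step_mono ar root (eqInf_out ar root)) _ _ hab

theorem eqInf_trans {F X : Type} (ar : F → ℕ) (root : Tm ar X → Tm ar X → Prop)
    {a b c : Tm ar X} (h1 : eqInf ar root a b) (h2 : eqInf ar root b c) : eqInf ar root a c :=
  eqInf_in ar root _ _ ((eqInf_out ar root _ _ h1).trans (eqInf_out ar root _ _ h2))

theorem eqInf_symm {F X : Type} (ar : F → ℕ) (root : Tm ar X → Tm ar X → Prop)
    {a b : Tm ar X} (h1 : eqInf ar root a b) : eqInf ar root b a := by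
  refine eqInf_coind ar root (flip (eqInf ar root)) (fun a b hab => ?_) _ _ h1
  have h := reflTransGen_swap.mpr (eqInf_out ar root _ _ hab)
  refine ReflTransGen.mono (fun x y hxy => ?_) _ _ h
  rcases hxy with (h | h) | (h | ⟨f, sa, ta, h1, h2, h3⟩)
  · exact Or.inl (Or.inr h)
  · exact Or.inl (Or.inl h)
  · exact Or.inr (Or.inl h.symm)
  · exact Or.inr (Or.inr ⟨f, ta, sa, h2, h1, h3⟩)

theorem ired_le_eqInf {F X : Type} (ar : F → ℕ) (root : Tm ar X → Tm ar X → Prop) :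
    ired ar root ≤ eqInf ar root := by
  unfold ired mu
  refine sInf_le ?_
  rw [Set.mem_setOf_eq]
  unfold nu
  refine sSup_le fun N hN => ?_
  refine le_trans (le_sup_left : N ≤ N ⊔ eqInf ar root) (eqInf_coind ar root _ fun a b hab => ?_)
  rcases hab with hab | hab
  · obtain ⟨c, h1, h2⟩ := hN a b hab
    refine ReflTransGen.tail (b := c) ?_ (Or.inr (lift_mono' ar (fun _ _ h => Or.inl h) h2))
    refine ReflTransGen.mono (fun x y hxy => ?_) _ _ h1
    rcases hxy with h | h
    · exact Or.inl (Or.inr h)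
    · exact Or.inr (lift_mono' ar (fun _ _ h => Or.inr h) h)
  · exact ReflTransGen.mono (fun _ _ => step_mono ar root (fun _ _ h => Or.inr h)) _ _
      (eqInf_out ar root _ _ hab)

/-- Infinitary conversion is contained in infinitary equational reasoning:
`((→→→)⁻¹ ∘ →→→)* ⊆ =^∞`. -/
theorem conversion_le_eqInf {F X : Type} (ar : F → ℕ)
    (root : Tm ar X → Tm ar X → Prop) :
    ReflTransGen (Relation.Comp (flip (ired ar root)) (ired ar root)) ≤
      eqInf ar root := by
  intro a b h
  induction h with
  | refl => exact eqInf_in ar root _ _ ReflTransGen.refl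
  | tail _ h ih =>
    obtain ⟨c, h1, h2⟩ := h
    exact eqInf_trans ar root ih (eqInf_trans ar root
      (eqInf_symm ar root (ired_le_eqInf ar root _ _ h1)) (ired_le_eqInf ar root _ _ h2))
end

section
/- The inclusion of infinitary conversion in infinitary equational reasoning is strict: in the signature with constants a, b and unary symbols f, C, let →ε = { (a, f(a)), (b, f(b)), (C(b), C(C(a))) }, and let f^ω and C^ω denote the unique terms satisfying f^ω = f(f^ω) and C^ω = C(C^ω) (which exist by corecursion). Then a =^∞ b, C(a) =^∞ C^ω, and C(a) is NOT related to C^ω by ((→→→)⁻¹ ∘ →→→)*; hence ((→→→)⁻¹ ∘ →→→)* ⊊ =^∞. -/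
open Relation

/-- The signature with constants `a`, `b` and unary symbols `f`, `C`. -/
inductive F4 : Type
  | a | b | f | C

/-- Arities: `a`, `b` are constants; `f`, `C` are unary. -/
def ar4 : F4 → ℕ
  | F4.a => 0
  | F4.b => 0
  | F4.f => 1
  | F4.C => 1

variable {X : Type}

/-- The constant `a` as a term. -/
def ta (X : Type) : Tm ar4 X := PFunctor.M.mk ⟨Sum.inr F4.a, Fin.elim0⟩

/-- The constant `b` as a term. -/
def tb (X : Type) : Tm ar4 X := PFunctor.M.mk ⟨Sum.inr F4.b, Fin.elim0⟩

/-- Application of the unary symbol `f`. -/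
def fApp (t : Tm ar4 X) : Tm ar4 X := PFunctor.M.mk ⟨Sum.inr F4.f, fun _ => t⟩

/-- Application of the unary symbol `C`. -/
def CApp (t : Tm ar4 X) : Tm ar4 X := PFunctor.M.mk ⟨Sum.inr F4.C, fun _ => t⟩

/-- The root-step relation `→ε = { (a, f(a)), (b, f(b)), (C(b), C(C(a))) }`. -/
def root4 (X : Type) : Tm ar4 X → Tm ar4 X → Prop := fun s t =>
  (s = ta X ∧ t = fApp (ta X)) ∨ (s = tb X ∧ t = fApp (tb X)) ∨
  (s = CApp (tb X) ∧ t = CApp (CApp (ta X)))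

/-- The term `f^ω`, obtained by corecursion. -/
def fomega (X : Type) : Tm ar4 X :=
  PFunctor.M.corec (fun _ : Unit => ⟨Sum.inr F4.f, fun _ => ()⟩) ()

/-- The term `C^ω`, obtained by corecursion. -/
def Comega (X : Type) : Tm ar4 X :=
  PFunctor.M.corec (fun _ : Unit => ⟨Sum.inr F4.C, fun _ => ()⟩) ()

theorem aux_mk_inr {g h : F4} {s : Fin (ar4 g) → Tm ar4 X} {t : Fin (ar4 h) → Tm ar4 X}
    (e : (PFunctor.M.mk (⟨Sum.inr g, s⟩ : Sig ar4 X (Tm ar4 X))) = PFunctor.M.mk ⟨Sum.inr h, t⟩) :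
    g = h ∧ HEq s t := by
  have e' : (⟨Sum.inr g, s⟩ : Sig ar4 X (Tm ar4 X)) = ⟨Sum.inr h, t⟩ := PFunctor.M.mk_inj e
  have h1 : (Sum.inr g : X ⊕ F4) = Sum.inr h := congrArg Sigma.fst e'
  cases h1
  exact ⟨rfl, by cases e'; rfl⟩

theorem aux_C_inj {s t : Tm ar4 X} (e : CApp s = CApp t) : s = t := by
  have := eq_of_heq (aux_mk_inr (X := X) (g := F4.C) (h := F4.C) e).2
  exact congrFun this (0 : Fin 1)

theorem aux_b_C {s : Tm ar4 X} : tb X ≠ CApp s := fun e =>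
  F4.noConfusion (aux_mk_inr (X := X) (g := F4.b) (h := F4.C) e).1
theorem aux_a_C {s : Tm ar4 X} : ta X ≠ CApp s := fun e =>
  F4.noConfusion (aux_mk_inr (X := X) (g := F4.a) (h := F4.C) e).1
theorem aux_a_b : ta X ≠ tb X := fun e =>
  F4.noConfusion (aux_mk_inr (X := X) (g := F4.a) (h := F4.b) e).1
theorem aux_f_C {s t : Tm ar4 X} : fApp t ≠ CApp s := fun e =>
  F4.noConfusion (aux_mk_inr (X := X) (g := F4.f) (h := F4.C) e).1
theorem aux_f_b {t : Tm ar4 X} : fApp t ≠ tb X := fun e =>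
  F4.noConfusion (aux_mk_inr (X := X) (g := F4.f) (h := F4.b) e).1

theorem aux_lift_C {R : Tm ar4 X → Tm ar4 X → Prop} {s t : Tm ar4 X} (h : R s t) :
    lift ar4 X R (CApp s) (CApp t) := Or.inr ⟨F4.C, _, _, rfl, rfl, fun _ => h⟩
theorem aux_lift_f {R : Tm ar4 X → Tm ar4 X → Prop} {s t : Tm ar4 X} (h : R s t) :
    lift ar4 X R (fApp s) (fApp t) := Or.inr ⟨F4.f, _, _, rfl, rfl, fun _ => h⟩

theorem aux_mkC (w : Fin (ar4 F4.C) → Tm ar4 X) :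
    PFunctor.M.mk (⟨Sum.inr F4.C, w⟩ : Sig ar4 X (Tm ar4 X)) = CApp (w (0 : Fin 1)) := by
  have : w = fun _ => w (0 : Fin 1) := by
    funext i
    exact congrArg w (Subsingleton.elim (α := Fin 1) i 0)
  exact congrArg (fun v : Fin (ar4 F4.C) → Tm ar4 X =>
    PFunctor.M.mk (⟨Sum.inr F4.C, v⟩ : Sig ar4 X (Tm ar4 X))) this

theorem aux_lift_C_left {R : Tm ar4 X → Tm ar4 X → Prop} {s t : Tm ar4 X}
    (h : lift ar4 X R (CApp s) t) : t = CApp s ∨ ∃ t', t = CApp t' ∧ R s t' := by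
  rcases h with h | ⟨g, sa, ta, h1, h2, h3⟩
  · exact Or.inl h.symm
  · obtain rfl := (aux_mk_inr (X := X) (g := F4.C) h1).1
    rw [aux_mkC] at h1 h2
    exact Or.inr ⟨_, h2, aux_C_inj h1 ▸ h3 (0 : Fin 1)⟩

theorem aux_lift_C_right {R : Tm ar4 X → Tm ar4 X → Prop} {s t : Tm ar4 X}
    (h : lift ar4 X R s (CApp t)) : s = CApp t ∨ ∃ s', s = CApp s' ∧ R s' t := by
  rcases h with h | ⟨g, sa, ta, h1, h2, h3⟩
  · exact Or.inl h
  · obtain rfl := (aux_mk_inr (X := X) (g := F4.C) h2).1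
    rw [aux_mkC] at h1 h2
    exact Or.inr ⟨_, h1, aux_C_inj h2 ▸ h3 (0 : Fin 1)⟩

theorem aux_lift_b_right {R : Tm ar4 X → Tm ar4 X → Prop} {s : Tm ar4 X}
    (h : lift ar4 X R s (tb X)) : s = tb X := by
  rcases h with h | ⟨g, sa, ta, h1, h2, h3⟩
  · exact h
  · obtain rfl := (aux_mk_inr (X := X) (g := F4.b) h2).1
    rw [h1]
    unfold tb
    congr 2
    funext i
    exact Fin.elim0 i

theorem aux_lift_mono {R S : Tm ar4 X → Tm ar4 X → Prop} (h : R ≤ S) :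
    lift ar4 X R ≤ lift ar4 X S := by
  rintro s t (e | ⟨g, sa, ta, h1, h2, h3⟩)
  · exact Or.inl e
  · exact Or.inr ⟨g, sa, ta, h1, h2, fun i => h _ _ (h3 i)⟩

/-- Weight of a term is at least `n`. -/
def auxW : ℕ → Tm ar4 X → Prop
  | 0, _ => True
  | n + 1, t => (t = tb X ∧ n = 0) ∨ ∃ t', t = CApp t' ∧ auxW n t'

theorem auxW_C {n : ℕ} {t : Tm ar4 X} : auxW (n + 1) (CApp t) ↔ auxW n t := by
  constructor
  · rintro (⟨e, _⟩ | ⟨t', e, h⟩)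
    · exact absurd e.symm aux_b_C
    · exact aux_C_inj e ▸ h
  · exact fun h => Or.inr ⟨t, rfl, h⟩

theorem auxW_a {n : ℕ} : ¬ auxW (n + 1) (ta X) := by
  rintro (⟨e, _⟩ | ⟨t', e, h⟩)
  · exact aux_a_b e
  · exact aux_a_C e

theorem auxW_f {n : ℕ} {t : Tm ar4 X} : ¬ auxW (n + 1) (fApp t) := by
  rintro (⟨e, _⟩ | ⟨t', e, h⟩)
  · exact aux_f_b e
  · exact aux_f_C e

theorem auxW_b {n : ℕ} : ¬ auxW (n + 2) (tb X) := by
  rintro (⟨_, e⟩ | ⟨t', e, h⟩)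
  · omega
  · exact aux_b_C e

theorem aux_inf {t : Tm ar4 X} (h : ∀ n, auxW n t) : ∃ t', t = CApp t' ∧ ∀ n, auxW n t' := by
  rcases h 2 with ⟨_, e⟩ | ⟨t', e, _⟩
  · exact absurd e (by decide)
  · subst e
    exact ⟨t', rfl, fun n => auxW_C.1 (h (n + 1))⟩

/-- The invariant. -/
def auxI (s t : Tm ar4 X) : Prop :=
  (∀ n, auxW n t → auxW n s) ∧ ((∀ n, auxW n s) → ∀ n, auxW n t)

theorem auxI_root {s t : Tm ar4 X} (h : root4 X s t) : auxI s t := by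
  rcases h with ⟨rfl, rfl⟩ | ⟨rfl, rfl⟩ | ⟨rfl, rfl⟩
  · refine ⟨?_, fun h => absurd (h 1) auxW_a⟩
    rintro (_ | n) h
    · trivial
    · exact absurd h auxW_f
  · refine ⟨?_, fun h => absurd (h 2) auxW_b⟩
    rintro (_ | n) h
    · trivial
    · exact absurd h auxW_f
  · refine ⟨?_, fun h => absurd (auxW_C.1 (h 3)) auxW_b⟩
    rintro (_ | _ | _ | n) h
    · trivial
    · exact auxW_C.2 trivial
    · exact auxW_C.2 (Or.inl ⟨rfl, rfl⟩)
    · exact absurd (auxW_C.1 (auxW_C.1 h)) auxW_a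

theorem auxI_lift {s t : Tm ar4 X} (h : lift ar4 X auxI s t) : auxI s t := by
  constructor
  · rintro (_ | n) hn
    · trivial
    · rcases hn with ⟨rfl, rfl⟩ | ⟨t', rfl, hn⟩
      · exact Or.inl ⟨aux_lift_b_right h, rfl⟩
      · rcases aux_lift_C_right h with rfl | ⟨s', rfl, h'⟩
        · exact auxW_C.2 hn
        · exact auxW_C.2 (h'.1 n hn)
  · intro hs
    obtain ⟨s', rfl, hs'⟩ := aux_inf hs
    rcases aux_lift_C_left h with rfl | ⟨t', rfl, h'⟩
    · exact hs
    · rintro (_ | n)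
      · trivial
      · exact auxW_C.2 (h'.2 hs' n)

theorem auxI_star {s t : Tm ar4 X} (h : ReflTransGen (root4 X ⊔ lift ar4 X auxI) s t) :
    auxI s t := by
  induction h with
  | refl => exact ⟨fun _ h => h, fun h => h⟩
  | tail _ h ih =>
    have h' : auxI _ _ := h.elim auxI_root auxI_lift
    exact ⟨fun n hn => ih.1 n (h'.1 n hn), fun hs => h'.2 (ih.2 hs)⟩

theorem auxI_ired : ired ar4 (root4 X) ≤ auxI := by
  refine sInf_le ?_
  refine sSup_le (α := Tm ar4 X → Tm ar4 X → Prop) ?_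
  intro y hy
  have key1 : ∀ n s t, y s t → auxW n t → auxW n s := by
    intro n
    induction n with
    | zero => intros; trivial
    | succ n ih =>
      intro s t hst ht
      obtain ⟨u, hsu, hut⟩ := hy s t hst
      apply (auxI_star hsu).1
      rcases ht with ⟨rfl, rfl⟩ | ⟨t', rfl, hn⟩
      · exact Or.inl ⟨aux_lift_b_right hut, rfl⟩
      · rcases aux_lift_C_right hut with rfl | ⟨s', rfl, h'⟩
        · exact auxW_C.2 hn
        · exact auxW_C.2 (ih _ _ h' hn)
  have key2 : ∀ n s t, y s t → (∀ k, auxW k s) → auxW n t := by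
    intro n
    induction n with
    | zero => intros; trivial
    | succ n ih =>
      intro s t hst hs
      obtain ⟨u, hsu, hut⟩ := hy s t hst
      have hu := (auxI_star hsu).2 hs
      obtain ⟨u', rfl, hu'⟩ := aux_inf hu
      rcases aux_lift_C_left hut with rfl | ⟨t', rfl, h'⟩
      · exact hu _
      · exact auxW_C.2 (ih _ _ h' hu')
  exact fun s t hst => ⟨fun n => key1 n s t hst, fun hs n => key2 n s t hst hs⟩

theorem aux_coind {Z : Tm ar4 X → Tm ar4 X → Prop}
    (h : Z ≤ ReflTransGen (flip (root4 X) ⊔ root4 X ⊔ lift ar4 X Z)) :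
    Z ≤ eqInf ar4 (root4 X) := le_sSup h

theorem aux_G_mono {Z Y : Tm ar4 X → Tm ar4 X → Prop} (h : Z ≤ Y) :
    ReflTransGen (flip (root4 X) ⊔ root4 X ⊔ lift ar4 X Z) ≤
    ReflTransGen (flip (root4 X) ⊔ root4 X ⊔ lift ar4 X Y) :=
  ReflTransGen.mono (fun _ _ k => Or.imp id (aux_lift_mono h _ _) k)

theorem aux_unfold : eqInf ar4 (root4 X) ≤
    ReflTransGen (flip (root4 X) ⊔ root4 X ⊔ lift ar4 X (eqInf ar4 (root4 X))) :=
  sSup_le fun _ hy => le_trans hy (aux_G_mono (aux_coind hy))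

theorem aux_fold :
    ReflTransGen (flip (root4 X) ⊔ root4 X ⊔ lift ar4 X (eqInf ar4 (root4 X))) ≤
    eqInf ar4 (root4 X) := aux_coind (aux_G_mono aux_unfold)

theorem aux_trans {s t u : Tm ar4 X} (h : eqInf ar4 (root4 X) s t) (k : eqInf ar4 (root4 X) t u) :
    eqInf ar4 (root4 X) s u :=
  aux_fold _ _ ((aux_unfold _ _ h).trans (aux_unfold _ _ k))

theorem aux_symm {s t : Tm ar4 X} (h : eqInf ar4 (root4 X) s t) : eqInf ar4 (root4 X) t s := by
  refine aux_coind (Z := flip (eqInf ar4 (root4 X))) ?_ _ _ h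
  intro s t hst
  have := aux_unfold _ _ hst
  clear hst h
  induction this with
  | refl => exact .refl
  | tail _ h ih =>
    refine .head ?_ ih
    rcases h with (h | h) | (h | ⟨g, sa, ta, h1, h2, h3⟩)
    · exact Or.inl (Or.inr h)
    · exact Or.inl (Or.inl h)
    · exact Or.inr (Or.inl h.symm)
    · exact Or.inr (Or.inr ⟨g, ta, sa, h2, h1, h3⟩)

theorem aux_ired_le : ired ar4 (root4 X) ≤ eqInf ar4 (root4 X) := by
  refine sInf_le ?_
  refine sSup_le (α := Tm ar4 X → Tm ar4 X → Prop) ?_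
  intro y hy
  refine le_trans (le_sup_left (b := eqInf ar4 (root4 X))) (aux_coind ?_)
  refine sup_le ?_ (le_trans aux_unfold (aux_G_mono le_sup_right))
  intro s t hst
  obtain ⟨u, hsu, hut⟩ := hy s t hst
  refine ReflTransGen.tail ?_ (Or.inr (aux_lift_mono le_sup_left _ _ hut))
  refine ReflTransGen.mono ?_ _ _ hsu
  exact fun _ _ k => k.elim (fun k => Or.inl (Or.inr k))
    (fun k => Or.inr (aux_lift_mono le_sup_right _ _ k))

theorem aux_Comega : Comega X = CApp (Comega X) := by
  exact PFunctor.M.corec_def (F := Sig ar4 X) (fun _ : Unit => ⟨Sum.inr F4.C, fun _ => ()⟩) ()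

theorem aux_fomega : fomega X = fApp (fomega X) := by
  exact PFunctor.M.corec_def (F := Sig ar4 X) (fun _ : Unit => ⟨Sum.inr F4.f, fun _ => ()⟩) ()

theorem aux_Comega_unique {u v : Tm ar4 X} (hu : u = CApp u) (hv : v = CApp v) : u = v := by
  refine PFunctor.M.bisim (fun s t => s = u ∧ t = v) ?_ u v ⟨rfl, rfl⟩
  rintro s t ⟨rfl, rfl⟩
  refine ⟨Sum.inr F4.C, fun _ => s, fun _ => t, ?_, ?_, fun _ => ⟨rfl, rfl⟩⟩
  · conv_lhs => rw [hu]
    exact PFunctor.M.dest_mk _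
  · conv_lhs => rw [hv]
    exact PFunctor.M.dest_mk _

theorem aux_fomega_unique {u v : Tm ar4 X} (hu : u = fApp u) (hv : v = fApp v) : u = v := by
  refine PFunctor.M.bisim (fun s t => s = u ∧ t = v) ?_ u v ⟨rfl, rfl⟩
  rintro s t ⟨rfl, rfl⟩
  refine ⟨Sum.inr F4.f, fun _ => s, fun _ => t, ?_, ?_, fun _ => ⟨rfl, rfl⟩⟩
  · conv_lhs => rw [hu]
    exact PFunctor.M.dest_mk _
  · conv_lhs => rw [hv]
    exact PFunctor.M.dest_mk _

theorem aux_ab : eqInf ar4 (root4 X) (ta X) (tb X) := by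
  refine aux_coind (Z := fun s t => s = ta X ∧ t = tb X) ?_ _ _ ⟨rfl, rfl⟩
  rintro s t ⟨rfl, rfl⟩
  refine .head (b := fApp (ta X)) (Or.inl (Or.inr (Or.inl ⟨rfl, rfl⟩))) ?_
  refine .head (b := fApp (tb X)) (Or.inr (aux_lift_f ⟨rfl, rfl⟩)) ?_
  exact .single (Or.inl (Or.inl (Or.inr (Or.inl ⟨rfl, rfl⟩))))

theorem aux_CaComega : eqInf ar4 (root4 X) (CApp (ta X)) (Comega X) := by
  refine aux_coind (Z := (fun s t => s = CApp (ta X) ∧ t = Comega X) ⊔ eqInf ar4 (root4 X))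
    ?_ _ _ (Or.inl ⟨rfl, rfl⟩)
  refine sup_le ?_ (le_trans aux_unfold (aux_G_mono le_sup_right))
  rintro s t ⟨rfl, rfl⟩
  refine .head (b := CApp (tb X)) (Or.inr (aux_lift_C (Or.inr aux_ab))) ?_
  refine .head (b := CApp (CApp (ta X))) (Or.inl (Or.inr (Or.inr (Or.inr ⟨rfl, rfl⟩)))) ?_
  refine .single (Or.inr ?_)
  have := aux_lift_C (R := (fun s t => s = CApp (ta X) ∧ t = Comega X) ⊔ eqInf ar4 (root4 X))
    (s := CApp (ta X)) (t := Comega X) (Or.inl ⟨rfl, rfl⟩)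
  rwa [← aux_Comega] at this

theorem auxW_Comega (n : ℕ) : auxW n (Comega X) := by
  induction n with
  | zero => trivial
  | succ n ih => rw [aux_Comega]; exact auxW_C.2 ih

theorem aux_not : ¬ ReflTransGen (Relation.Comp (flip (ired ar4 (root4 X))) (ired ar4 (root4 X)))
    (CApp (ta X)) (Comega X) := by
  intro h
  have key : ∀ s, ReflTransGen (Relation.Comp (flip (ired ar4 (root4 X))) (ired ar4 (root4 X)))
    s (Comega X) → ∀ n, auxW n s := by
    intro s hs
    induction hs using ReflTransGen.head_induction_on with
    | refl => exact auxW_Comega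
    | head h _ ih =>
      obtain ⟨u, h1, h2⟩ := h
      exact (auxI_ired _ _ h1).2 fun n => (auxI_ired _ _ h2).1 n (ih n)
  exact auxW_a (auxW_C.1 (key _ h 2))


/-- `f^ω` and `C^ω` satisfy their defining equations and are the unique such terms;
`a =^∞ b`; `C(a) =^∞ C^ω`; `C(a)` and `C^ω` are not infinitarily convertible;
hence infinitary conversion `((→→→)⁻¹ ∘ →→→)*` is strictly contained in `=^∞`. -/
theorem conversion_strictly_below_eqInf (X : Type) :
    (fomega X = fApp (fomega X) ∧ ∀ u : Tm ar4 X, u = fApp u → u = fomega X) ∧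
    (Comega X = CApp (Comega X) ∧ ∀ u : Tm ar4 X, u = CApp u → u = Comega X) ∧
    eqInf ar4 (root4 X) (ta X) (tb X) ∧
    eqInf ar4 (root4 X) (CApp (ta X)) (Comega X) ∧
    ¬ ReflTransGen (Relation.Comp (flip (ired ar4 (root4 X))) (ired ar4 (root4 X)))
        (CApp (ta X)) (Comega X) ∧
    ReflTransGen (Relation.Comp (flip (ired ar4 (root4 X))) (ired ar4 (root4 X))) <
      eqInf ar4 (root4 X) := by
  refine ⟨⟨aux_fomega, fun u hu => aux_fomega_unique hu aux_fomega⟩,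
    ⟨aux_Comega, fun u hu => aux_Comega_unique hu aux_Comega⟩, aux_ab, aux_CaComega, aux_not, ?_⟩
  refine lt_of_le_not_ge ?_ fun h => aux_not (h _ _ aux_CaComega)
  intro s t hst
  induction hst with
  | refl => exact aux_fold _ _ .refl
  | tail _ h ih =>
    obtain ⟨u, h1, h2⟩ := h
    exact aux_trans ih (aux_trans (aux_symm (aux_ired_le _ _ h1)) (aux_ired_le _ _ h2))
end
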